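/- Variance lower bound for the relative error influence function (non-degeneracy under condition (c) of Theorem 2): under the additive noise model, for any bounded measurable τ̂₁, τ̂₂ : 𝒳 → ℝ, Var( τ̂₁(X)² − τ̂₂(X)² − 2(τ̂₁(X) − τ̂₂(X))·Γ ) ≥ 16·σ²·E[(τ̂₁(X) − τ̂₂(X))²]. In particular, if E[(τ̂₁(X) − τ̂₂(X))²] > 0 and σ² > 0, the influence function has strictly positive variance. -/

import Mathlib

open MeasureTheory ProbabilityTheory

/-!
Given `(X, W)`, the pseudo-outcome is affine in the noise:
`Γ = μ₁(X) - μ₀(X) + (W / e(X) - (1 - W) / (1 - e(X))) ε`. The variance is at least the mean of the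
conditional variances given `(X, W)`, which here is `4 σ²` times the mean of
`(τ̂₁(X) - τ̂₂(X))² (W / e(X) - (1 - W) / (1 - e(X)))²`. Conditionally on `X`, the last square has
mean `1 / e(X) + 1 / (1 - e(X)) ≥ 4`. Working with `ℝ≥0∞`-valued variances and integrals, none of
this needs integrability.
-/

open scoped ENNReal

section Variance

variable {Ω : Type*} [MeasurableSpace Ω] {P : Measure Ω} [IsProbabilityMeasure P]

lemma evariance_const_add {f : Ω → ℝ} (hf : AEStronglyMeasurable f P) (c : ℝ) :
    eVar[fun ω => c + f ω; P] = eVar[f; P] := by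
  by_cases hfL2 : MemLp f 2 P
  · have hcfL2 : MemLp (fun ω => c + f ω) 2 P := (memLp_const c).add hfL2
    rw [← ofReal_variance hfL2, ← ofReal_variance hcfL2, variance_const_add hf]
  · have hcfL2 : ¬ MemLp (fun ω => c + f ω) 2 P := fun h =>
      hfL2 (by simpa [Pi.sub_def] using h.sub (memLp_const c))
    rw [evariance_eq_top hf hfL2, evariance_eq_top (by fun_prop) hcfL2]

lemma evariance_le_lintegral_sub_sq {f : Ω → ℝ} (hf : AEStronglyMeasurable f P) (c : ℝ) :
    eVar[f; P] ≤ ∫⁻ ω, ‖f ω - c‖ₑ ^ 2 ∂P := by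
  have hfc : AEStronglyMeasurable (fun ω => -c + f ω) P := by fun_prop
  rw [← evariance_const_add hf (-c), evariance_def' hfc]
  simpa only [neg_add_eq_sub] using tsub_le_self

lemma lintegral_evariance_le_evariance_of_indepFun {𝒵 𝒰 : Type*} [MeasurableSpace 𝒵]
    [MeasurableSpace 𝒰] {Z : Ω → 𝒵} {U : Ω → 𝒰} (hZ : AEMeasurable Z P) (hU : AEMeasurable U P)
    (hZU : IndepFun Z U P) {F : 𝒵 × 𝒰 → ℝ} (hF : Measurable F) :
    ∫⁻ ω, eVar[fun ω' => F (Z ω, U ω'); P] ∂P ≤ eVar[fun ω => F (Z ω, U ω); P] := by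
  set c := ∫ ω, F (Z ω, U ω) ∂P
  have hG : Measurable fun q : 𝒵 × 𝒰 => ‖F q - c‖ₑ ^ 2 := by fun_prop
  calc ∫⁻ ω, eVar[fun ω' => F (Z ω, U ω'); P] ∂P
      ≤ ∫⁻ ω, ∫⁻ ω', ‖F (Z ω, U ω') - c‖ₑ ^ 2 ∂P ∂P := lintegral_mono fun ω =>
        evariance_le_lintegral_sub_sq
          ((hF.comp measurable_prodMk_left).comp_aemeasurable hU).aestronglyMeasurable c
    _ = ∫⁻ z, ∫⁻ u, ‖F (z, u) - c‖ₑ ^ 2 ∂P.map U ∂P.map Z := by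
        rw [lintegral_map' hG.lintegral_prod_right'.aemeasurable hZ]
        exact lintegral_congr fun ω =>
          (lintegral_map' (hG.comp measurable_prodMk_left).aemeasurable hU).symm
    _ = ∫⁻ q, ‖F q - c‖ₑ ^ 2 ∂P.map (fun ω => (Z ω, U ω)) := by
        rw [hZU.map_prod_eq_prod_map_map hZ hU, lintegral_prod _ hG.aemeasurable]
    _ = eVar[fun ω => F (Z ω, U ω); P] := lintegral_map' hG.aemeasurable (hZ.prodMk hU)

lemma evariance_mul_lintegral_sq_le_evariance_add_mul {𝒵 : Type*} [MeasurableSpace 𝒵]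
    {Z : Ω → 𝒵} {ε : Ω → ℝ} (hZ : AEMeasurable Z P) (hε : AEMeasurable ε P)
    (hZε : IndepFun Z ε P) {g h : 𝒵 → ℝ} (hg : Measurable g) (hh : Measurable h) :
    eVar[ε; P] * ∫⁻ ω, ENNReal.ofReal (h (Z ω) ^ 2) ∂P
      ≤ eVar[fun ω => g (Z ω) + h (Z ω) * ε ω; P] := by
  have hhZ : AEMeasurable (fun ω => ENNReal.ofReal (h (Z ω) ^ 2)) P :=
    (hh.pow_const 2).ennreal_ofReal.comp_aemeasurable hZ
  calc eVar[ε; P] * ∫⁻ ω, ENNReal.ofReal (h (Z ω) ^ 2) ∂P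
      = ∫⁻ ω, eVar[fun ω' => g (Z ω) + h (Z ω) * ε ω'; P] ∂P := by
        rw [← lintegral_const_mul'' _ hhZ]
        refine lintegral_congr fun ω => ?_
        rw [evariance_const_add (hε.const_mul _).aestronglyMeasurable, evariance_mul, mul_comm]
    _ ≤ eVar[fun ω => g (Z ω) + h (Z ω) * ε ω; P] :=
        lintegral_evariance_le_evariance_of_indepFun hZ hε hZε
          (F := fun q => g q.1 + h q.1 * q.2) (by fun_prop)

end Variance

lemma lintegral_mul_condLExp {Ω : Type*} {m mΩ : MeasurableSpace Ω} {P : Measure Ω} (hm : m ≤ mΩ)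
    [SigmaFinite (P.trim hm)] {k f : Ω → ℝ≥0∞} (hk : Measurable[m] k) (hf : AEMeasurable f P) :
    ∫⁻ ω, k ω * P⁻[f | m] ω ∂P = ∫⁻ ω, k ω * f ω ∂P := by
  have trim_eq : (P.withDensity P⁻[f | m]).trim hm = (P.withDensity f).trim hm := by
    refine @Measure.ext _ m _ _ fun s hs => ?_
    rw [trim_measurableSet_eq hm hs, trim_measurableSet_eq hm hs, withDensity_apply _ (hm s hs),
      withDensity_apply _ (hm s hs), setLIntegral_condLExp hm P f hs]
  have lintegral_eq_trim {φ : Ω → ℝ≥0∞} (hφ : AEMeasurable φ P) :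
      ∫⁻ ω, k ω * φ ω ∂P = ∫⁻ ω, k ω ∂(P.withDensity φ).trim hm := by
    rw [lintegral_trim hm hk,
      lintegral_withDensity_eq_lintegral_mul₀ hφ (hk.mono hm le_rfl).aemeasurable]
    simp only [Pi.mul_apply, mul_comm]
  rw [lintegral_eq_trim (by fun_prop), lintegral_eq_trim hf, trim_eq]

lemma lintegral_mul_ofReal_condExp {Ω : Type*} {m mΩ : MeasurableSpace Ω} {P : Measure Ω}
    (hm : m ≤ mΩ) [SigmaFinite (P.trim hm)] {k : Ω → ℝ≥0∞} {f : Ω → ℝ} (hk : Measurable[m] k)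
    (hf : Integrable f P) (hf_nonneg : 0 ≤ᵐ[P] f) :
    ∫⁻ ω, k ω * ENNReal.ofReal (P[f | m] ω) ∂P = ∫⁻ ω, k ω * ENNReal.ofReal (f ω) ∂P := by
  rw [← lintegral_mul_condLExp hm hk hf.aemeasurable.ennreal_ofReal]
  refine lintegral_congr_ae ?_
  filter_upwards [condLExp_ofReal m hf hf_nonneg] with ω hω
  rw [hω]

section InversePropensity

/-- The signed inverse-propensity weight `w / p - (1 - w) / (1 - p)` of a unit with treatment
indicator `w` and propensity `p`; it is the coefficient of the outcome noise in the AIPW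
pseudo-outcome. -/
noncomputable def ipwWeight (p w : ℝ) : ℝ := w / p - (1 - w) / (1 - p)

@[fun_prop]
lemma measurable_ipwWeight : Measurable fun q : ℝ × ℝ => ipwWeight q.1 q.2 := by
  unfold ipwWeight
  fun_prop

lemma abs_ipwWeight_le {η p w : ℝ} (hη : 0 < η) (hp : η ≤ p) (hp' : p ≤ 1 - η)
    (hw : w = 0 ∨ w = 1) : |ipwWeight p w| ≤ η⁻¹ := by
  rcases hw with rfl | rfl
  · simpa [ipwWeight, abs_of_pos (show 0 < 1 - p by linarith)] using
      inv_anti₀ hη (show η ≤ 1 - p by linarith)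
  · simpa [ipwWeight, abs_of_pos (hη.trans_le hp)] using inv_anti₀ hη hp

lemma ofReal_ipwWeight_sq {p w : ℝ} (hw : w = 0 ∨ w = 1) :
    ENNReal.ofReal (ipwWeight p w ^ 2)
      = ENNReal.ofReal (p⁻¹ ^ 2) * ENNReal.ofReal w
        + ENNReal.ofReal ((1 - p)⁻¹ ^ 2) * ENNReal.ofReal (1 - w) := by
  rcases hw with rfl | rfl <;> simp [ipwWeight]

lemma ofReal_inv_sq_mul_ofReal {p : ℝ} (hp : 0 < p) :
    ENNReal.ofReal (p⁻¹ ^ 2) * ENNReal.ofReal p = ENNReal.ofReal p⁻¹ := by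
  rw [← ENNReal.ofReal_mul (by positivity)]
  congr 1
  field_simp

lemma four_le_inv_add_inv_one_sub {p : ℝ} (hp : 0 < p) (hp' : p < 1) :
    4 ≤ p⁻¹ + (1 - p)⁻¹ := by
  have hq : 0 < 1 - p := sub_pos.2 hp'
  rw [inv_add_inv hp.ne' hq.ne', le_div_iff₀ (mul_pos hp hq)]
  linarith [sq_nonneg (2 * p - 1)]

variable {Ω : Type*} {m mΩ : MeasurableSpace Ω} {P : Measure Ω} {k : Ω → ℝ≥0∞}
  {W p : Ω → ℝ}

lemma lintegral_mul_inv_condExp_sq_mul_ofReal (hm : m ≤ mΩ) [SigmaFinite (P.trim hm)]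
    (hk : Measurable[m] k) (hW : Integrable W P) (hW_nonneg : 0 ≤ᵐ[P] W) (hp : Measurable[m] p)
    (hWp : P[W | m] =ᵐ[P] p) (hp_pos : ∀ᵐ ω ∂P, 0 < p ω) :
    ∫⁻ ω, k ω * (ENNReal.ofReal ((p ω)⁻¹ ^ 2) * ENNReal.ofReal (W ω)) ∂P
      = ∫⁻ ω, k ω * ENNReal.ofReal (p ω)⁻¹ ∂P := by
  have hkp : Measurable[m] fun ω => k ω * ENNReal.ofReal ((p ω)⁻¹ ^ 2) := by fun_prop
  simp only [← mul_assoc]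
  rw [← lintegral_mul_ofReal_condExp hm hkp hW hW_nonneg]
  refine lintegral_congr_ae ?_
  filter_upwards [hWp, hp_pos] with ω hWpω hpω
  rw [hWpω, mul_assoc, ofReal_inv_sq_mul_ofReal hpω]

variable [IsFiniteMeasure P]

lemma lintegral_mul_ipwWeight_sq (hm : m ≤ mΩ) (hk : Measurable[m] k) (hW : AEMeasurable W P)
    (hW01 : ∀ᵐ ω ∂P, W ω = 0 ∨ W ω = 1) (hp : Measurable[m] p) (hWp : P[W | m] =ᵐ[P] p)
    (hp01 : ∀ᵐ ω ∂P, p ω ∈ Set.Ioo 0 1) :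
    ∫⁻ ω, k ω * ENNReal.ofReal (ipwWeight (p ω) (W ω) ^ 2) ∂P
      = ∫⁻ ω, k ω * ENNReal.ofReal ((p ω)⁻¹ + (1 - p ω)⁻¹) ∂P := by
  have hkm : Measurable k := hk.mono hm le_rfl
  have hpm : Measurable p := hp.mono hm le_rfl
  have hW_int : Integrable W P := .of_bound hW.aestronglyMeasurable 1
    (hW01.mono fun ω h => by rcases h with h | h <;> simp [h])
  have condExp_one_sub : P[fun ω => 1 - W ω | m] =ᵐ[P] fun ω => 1 - p ω := by
    filter_upwards [condExp_sub (integrable_const (1 : ℝ)) hW_int m, hWp] with ω hω hWpω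
    simpa [condExp_const hm, hWpω] using! hω
  calc ∫⁻ ω, k ω * ENNReal.ofReal (ipwWeight (p ω) (W ω) ^ 2) ∂P
      = ∫⁻ ω, k ω * (ENNReal.ofReal ((p ω)⁻¹ ^ 2) * ENNReal.ofReal (W ω))
          + k ω * (ENNReal.ofReal ((1 - p ω)⁻¹ ^ 2) * ENNReal.ofReal (1 - W ω)) ∂P :=
        lintegral_congr_ae (hW01.mono fun ω hWω => by
          simp only [ofReal_ipwWeight_sq hWω, mul_add])
    _ = ∫⁻ ω, k ω * ENNReal.ofReal (p ω)⁻¹ ∂P + ∫⁻ ω, k ω * ENNReal.ofReal (1 - p ω)⁻¹ ∂P := by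
        rw [lintegral_add_left' (by fun_prop)]
        congr 1
        · exact lintegral_mul_inv_condExp_sq_mul_ofReal hm hk hW_int
            (hW01.mono fun ω h => by rcases h with h | h <;> simp [h]) hp hWp
            (hp01.mono fun ω h => h.1)
        · exact lintegral_mul_inv_condExp_sq_mul_ofReal hm hk ((integrable_const 1).sub hW_int)
            (hW01.mono fun ω h => by rcases h with h | h <;> simp [h])
            (measurable_const.sub hp) condExp_one_sub (hp01.mono fun ω h => sub_pos.2 h.2)
    _ = ∫⁻ ω, k ω * ENNReal.ofReal ((p ω)⁻¹ + (1 - p ω)⁻¹) ∂P := by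
        rw [← lintegral_add_left (by fun_prop)]
        refine lintegral_congr_ae (hp01.mono fun ω h => ?_)
        simp only [ENNReal.ofReal_add (inv_pos.2 h.1).le (inv_pos.2 (sub_pos.2 h.2)).le, mul_add]

lemma four_mul_lintegral_le_lintegral_mul_ipwWeight_sq (hm : m ≤ mΩ) (hk : Measurable[m] k)
    (hW : AEMeasurable W P) (hW01 : ∀ᵐ ω ∂P, W ω = 0 ∨ W ω = 1) (hp : Measurable[m] p)
    (hWp : P[W | m] =ᵐ[P] p) (hp01 : ∀ᵐ ω ∂P, p ω ∈ Set.Ioo 0 1) :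
    4 * ∫⁻ ω, k ω ∂P ≤ ∫⁻ ω, k ω * ENNReal.ofReal (ipwWeight (p ω) (W ω) ^ 2) ∂P := by
  rw [lintegral_mul_ipwWeight_sq hm hk hW hW01 hp hWp hp01,
    ← lintegral_const_mul _ (hk.mono hm le_rfl)]
  refine lintegral_mono_ae ?_
  filter_upwards [hp01] with ω hpω
  rw [mul_comm]
  gcongr
  simpa using ENNReal.ofReal_le_ofReal (four_le_inv_add_inv_one_sub hpω.1 hpω.2)

lemma sixteen_mul_lintegral_sq_le_lintegral_mul_ipwWeight_sq {d : Ω → ℝ} (hm : m ≤ mΩ)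
    (hd : Measurable[m] d) (hW : AEMeasurable W P) (hW01 : ∀ᵐ ω ∂P, W ω = 0 ∨ W ω = 1)
    (hp : Measurable[m] p) (hWp : P[W | m] =ᵐ[P] p) (hp01 : ∀ᵐ ω ∂P, p ω ∈ Set.Ioo 0 1) :
    16 * ∫⁻ ω, ENNReal.ofReal (d ω ^ 2) ∂P
      ≤ ∫⁻ ω, ENNReal.ofReal ((-2 * d ω * ipwWeight (p ω) (W ω)) ^ 2) ∂P := by
  have hd2 : Measurable[m] fun ω => ENNReal.ofReal (d ω ^ 2) := by fun_prop
  have sq_eq (ω : Ω) : ENNReal.ofReal ((-2 * d ω * ipwWeight (p ω) (W ω)) ^ 2)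
      = 4 * (ENNReal.ofReal (d ω ^ 2) * ENNReal.ofReal (ipwWeight (p ω) (W ω) ^ 2)) := by
    rw [mul_pow, mul_pow, ENNReal.ofReal_mul (by positivity), ENNReal.ofReal_mul (by norm_num),
      mul_assoc]
    norm_num
  calc 16 * ∫⁻ ω, ENNReal.ofReal (d ω ^ 2) ∂P
      = 4 * (4 * ∫⁻ ω, ENNReal.ofReal (d ω ^ 2) ∂P) := by rw [← mul_assoc]; norm_num
    _ ≤ 4 * ∫⁻ ω, ENNReal.ofReal (d ω ^ 2) * ENNReal.ofReal (ipwWeight (p ω) (W ω) ^ 2) ∂P := by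
        gcongr
        exact four_mul_lintegral_le_lintegral_mul_ipwWeight_sq hm hd2 hW hW01 hp hWp hp01
    _ = ∫⁻ ω, ENNReal.ofReal ((-2 * d ω * ipwWeight (p ω) (W ω)) ^ 2) ∂P := by
        simp only [sq_eq]
        rw [lintegral_const_mul' _ _ (by norm_num)]

end InversePropensity

section InfluenceFunction

/-- The AIPW pseudo-outcome `Γ` of a unit with treatment indicator `w`, outcome `y`, propensity `p`
and mean outcomes `m₀`, `m₁` under control and treatment. -/
noncomputable def aipwPseudoOutcome (p m₀ m₁ w y : ℝ) : ℝ :=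
  w * (y - m₁) / p + m₁ - (1 - w) * (y - m₀) / (1 - p) - m₀

/-- The (uncentred) influence function `t₁² - t₂² - 2 (t₁ - t₂) γ` of the relative error of two
treatment effect estimates `t₁`, `t₂`, where `γ` is the pseudo-outcome. -/
def relativeErrorInfluence (t₁ t₂ γ : ℝ) : ℝ := t₁ ^ 2 - t₂ ^ 2 - 2 * (t₁ - t₂) * γ

lemma aipwPseudoOutcome_additive_noise {w : ℝ} (hw : w = 0 ∨ w = 1) (p m₀ m₁ u : ℝ) :
    aipwPseudoOutcome p m₀ m₁ w (w * m₁ + (1 - w) * m₀ + u) = m₁ - m₀ + ipwWeight p w * u := by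
  rcases hw with rfl | rfl <;> simp only [aipwPseudoOutcome, ipwWeight] <;> ring

lemma relativeErrorInfluence_add_mul (t₁ t₂ a b u : ℝ) :
    relativeErrorInfluence t₁ t₂ (a + b * u)
      = relativeErrorInfluence t₁ t₂ a + -2 * (t₁ - t₂) * b * u := by
  simp only [relativeErrorInfluence]
  ring

variable {Ω : Type*} [MeasurableSpace Ω] {P : Measure Ω} {q : ℝ≥0∞}

lemma memLp_relativeErrorInfluence [IsFiniteMeasure P] {t₁ t₂ γ : Ω → ℝ} (ht₁ : MemLp t₁ ∞ P)
    (ht₂ : MemLp t₂ ∞ P) (hγ : MemLp γ q P) :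
    MemLp (fun ω => relativeErrorInfluence (t₁ ω) (t₂ ω) (γ ω)) q P := by
  have hsq {t : Ω → ℝ} (ht : MemLp t ∞ P) : MemLp (fun ω => t ω ^ 2) q P := by
    simpa only [sq] using (ht.mul' ht (r := ∞)).mono_exponent le_top
  exact ((hsq ht₁).sub (hsq ht₂)).sub (hγ.mul' ((ht₁.sub ht₂).const_mul 2))

lemma memLp_aipwPseudoOutcome_additive_noise {p m₀ m₁ W Y ε : Ω → ℝ} {η : ℝ} (hη : 0 < η)
    (hp : AEMeasurable p P) (hpη : ∀ᵐ ω ∂P, η ≤ p ω ∧ p ω ≤ 1 - η) (hW : AEMeasurable W P)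
    (hW01 : ∀ᵐ ω ∂P, W ω = 0 ∨ W ω = 1) (hm₀ : MemLp m₀ q P) (hm₁ : MemLp m₁ q P)
    (hε : MemLp ε q P) (hY : ∀ᵐ ω ∂P, Y ω = W ω * m₁ ω + (1 - W ω) * m₀ ω + ε ω) :
    MemLp (fun ω => aipwPseudoOutcome (p ω) (m₀ ω) (m₁ ω) (W ω) (Y ω)) q P := by
  have hweight : MemLp (fun ω => ipwWeight (p ω) (W ω)) ∞ P := by
    refine memLp_top_of_bound
      (measurable_ipwWeight.comp_aemeasurable (hp.prodMk hW)).aestronglyMeasurable η⁻¹ ?_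
    filter_upwards [hpη, hW01] with ω hpω hWω using abs_ipwWeight_le hη hpω.1 hpω.2 hWω
  refine ((hm₁.sub hm₀).add (hε.mul' hweight)).ae_eq ?_
  filter_upwards [hW01, hY] with ω hWω hYω
  rw [hYω, aipwPseudoOutcome_additive_noise hWω]
  rfl

end InfluenceFunction

theorem relative_error_variance_lower_bound_general
    {Ω 𝒳 : Type*} [MeasurableSpace Ω] [m𝒳 : MeasurableSpace 𝒳]
    {P : Measure Ω} [IsProbabilityMeasure P] {X : Ω → 𝒳} {W Y ε : Ω → ℝ}
    (hX : Measurable X) (hW : AEMeasurable W P) (hW01 : ∀ᵐ ω ∂P, W ω = 0 ∨ W ω = 1)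
    {e μ₀ μ₁ : 𝒳 → ℝ} (he : Measurable e) (hμ₀ : Measurable μ₀) (hμ₁ : Measurable μ₁)
    (hoverlap : ∀ᵐ ω ∂P, e (X ω) ∈ Set.Ioo 0 1)
    (hce : P[W | m𝒳.comap X] =ᵐ[P] fun ω => e (X ω))
    (hε : AEMeasurable ε P) (hindep : IndepFun (fun ω => (X ω, W ω)) ε P)
    (hmodel : ∀ᵐ ω ∂P, Y ω = W ω * μ₁ (X ω) + (1 - W ω) * μ₀ (X ω) + ε ω)
    {τ₁ τ₂ : 𝒳 → ℝ} (hτ₁ : Measurable τ₁) (hτ₂ : Measurable τ₂) :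
    16 * eVar[ε; P] * ∫⁻ ω, ENNReal.ofReal ((τ₁ (X ω) - τ₂ (X ω)) ^ 2) ∂P
      ≤ eVar[fun ω => relativeErrorInfluence (τ₁ (X ω)) (τ₂ (X ω))
          (aipwPseudoOutcome (e (X ω)) (μ₀ (X ω)) (μ₁ (X ω)) (W ω) (Y ω)); P] := by
  let g (z : 𝒳 × ℝ) : ℝ := relativeErrorInfluence (τ₁ z.1) (τ₂ z.1) (μ₁ z.1 - μ₀ z.1)
  let h (z : 𝒳 × ℝ) : ℝ := -2 * (τ₁ z.1 - τ₂ z.1) * ipwWeight (e z.1) z.2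
  have hg : Measurable g := by unfold g relativeErrorInfluence; fun_prop
  have hh : Measurable h := by fun_prop
  have influence_eq : (fun ω => relativeErrorInfluence (τ₁ (X ω)) (τ₂ (X ω))
      (aipwPseudoOutcome (e (X ω)) (μ₀ (X ω)) (μ₁ (X ω)) (W ω) (Y ω)))
      =ᵐ[P] fun ω => g (X ω, W ω) + h (X ω, W ω) * ε ω := by
    filter_upwards [hW01, hmodel] with ω hWω hYω
    rw [hYω, aipwPseudoOutcome_additive_noise hWω, relativeErrorInfluence_add_mul]
  have sq_le : 16 * ∫⁻ ω, ENNReal.ofReal ((τ₁ (X ω) - τ₂ (X ω)) ^ 2) ∂P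
      ≤ ∫⁻ ω, ENNReal.ofReal (h (X ω, W ω) ^ 2) ∂P :=
    sixteen_mul_lintegral_sq_le_lintegral_mul_ipwWeight_sq hX.comap_le
      ((hτ₁.sub hτ₂).comp (comap_measurable X)) hW hW01 (he.comp (comap_measurable X)) hce hoverlap
  calc 16 * eVar[ε; P] * ∫⁻ ω, ENNReal.ofReal ((τ₁ (X ω) - τ₂ (X ω)) ^ 2) ∂P
      = eVar[ε; P] * (16 * ∫⁻ ω, ENNReal.ofReal ((τ₁ (X ω) - τ₂ (X ω)) ^ 2) ∂P) := by ring
    _ ≤ eVar[ε; P] * ∫⁻ ω, ENNReal.ofReal (h (X ω, W ω) ^ 2) ∂P := by gcongr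
    _ ≤ eVar[fun ω => g (X ω, W ω) + h (X ω, W ω) * ε ω; P] :=
        evariance_mul_lintegral_sq_le_evariance_add_mul (hX.aemeasurable.prodMk hW) hε hindep hg hh
    _ = _ := (evariance_congr influence_eq).symm

/-- Variance lower bound for the relative error influence function (non-degeneracy): under the
additive noise model, `Var(τ̂₁(X)² − τ̂₂(X)² − 2(τ̂₁(X) − τ̂₂(X))·Γ) ≥ 16σ²·E[(τ̂₁(X) − τ̂₂(X))²]`. -/
theorem relative_error_variance_lower_bound
    {Ω 𝒳 : Type*} [MeasurableSpace Ω] [m𝒳 : MeasurableSpace 𝒳]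
    (P : Measure Ω) [IsProbabilityMeasure P]
    (X : Ω → 𝒳) (W Y : Ω → ℝ)
    (hX : Measurable X) (hW : Measurable W) (hY : Measurable Y)
    (hW01 : ∀ᵐ ω ∂P, W ω = 0 ∨ W ω = 1)
    (e μ₀ μ₁ : 𝒳 → ℝ)
    (he : Measurable e) (hμ₀ : Measurable μ₀) (hμ₁ : Measurable μ₁)
    (C₀ C₁ : ℝ) (hμ₀b : ∀ x, |μ₀ x| ≤ C₀) (hμ₁b : ∀ x, |μ₁ x| ≤ C₁)
    (η : ℝ) (hη₀ : 0 < η) (hη₁ : η < 1/2)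
    (heb : ∀ x, η ≤ e x ∧ e x ≤ 1 - η)
    (hce : P[W | m𝒳.comap X] =ᵐ[P] fun ω => e (X ω))
    (ε : Ω → ℝ) (hε : Measurable ε)
    (hindep : IndepFun (fun ω => (X ω, W ω)) ε P)
    (hε2 : MemLp ε 2 P) (hεmean : ∫ ω, ε ω ∂P = 0)
    (σ2 : ℝ) (hεvar : variance ε P = σ2)
    (hmodel : ∀ᵐ ω ∂P, Y ω = W ω * μ₁ (X ω) + (1 - W ω) * μ₀ (X ω) + ε ω) :
    ∀ (τhat₁ τhat₂ : 𝒳 → ℝ) (B₁ B₂ : ℝ), Measurable τhat₁ → Measurable τhat₂ →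
      (∀ x, |τhat₁ x| ≤ B₁) → (∀ x, |τhat₂ x| ≤ B₂) →
      variance (fun ω => τhat₁ (X ω) ^ 2 - τhat₂ (X ω) ^ 2
          - 2 * (τhat₁ (X ω) - τhat₂ (X ω))
            * (W ω * (Y ω - μ₁ (X ω)) / e (X ω) + μ₁ (X ω)
              - (1 - W ω) * (Y ω - μ₀ (X ω)) / (1 - e (X ω)) - μ₀ (X ω))) P
        ≥ 16 * σ2 * ∫ ω, (τhat₁ (X ω) - τhat₂ (X ω)) ^ 2 ∂P := by
  intro τ₁ τ₂ B₁ B₂ hτ₁ hτ₂ hB₁ hB₂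
  have memLp_top_comp {f : 𝒳 → ℝ} {B : ℝ} (hf : Measurable f) (hB : ∀ x, |f x| ≤ B) :
      MemLp (fun ω => f (X ω)) ∞ P :=
    memLp_top_of_bound (hf.comp hX).aestronglyMeasurable B (ae_of_all _ fun ω => hB (X ω))
  have influence_memLp := memLp_relativeErrorInfluence
    (memLp_top_comp hτ₁ hB₁) (memLp_top_comp hτ₂ hB₂)
    (memLp_aipwPseudoOutcome_additive_noise hη₀ (he.comp hX).aemeasurable
      (ae_of_all _ fun ω => heb (X ω)) hW.aemeasurable hW01
      ((memLp_top_comp hμ₀ hμ₀b).mono_exponent le_top)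
      ((memLp_top_comp hμ₁ hμ₁b).mono_exponent le_top) hε2 hmodel)
  have overlap (x : 𝒳) : e x ∈ Set.Ioo 0 1 := ⟨by linarith [heb x], by linarith [heb x]⟩
  rw [← hεvar, integral_eq_lintegral_of_nonneg_ae (ae_of_all _ fun _ => sq_nonneg _)
    (by fun_prop)]
  simpa [ENNReal.toReal_mul] using! ENNReal.toReal_mono (evariance_ne_top influence_memLp)
    (relative_error_variance_lower_bound_general hX hW.aemeasurable hW01 he hμ₀ hμ₁
      (ae_of_all _ fun ω => overlap (X ω)) hce hε.aemeasurable hindep hmodel hτ₁ hτ₂)
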